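/- Lemma 2.2: Assume (h1), (h2) and (h3). Then condition (h3⁰) holds: whenever u ∈ Ū, λ ∈ (0,1) and u(t) = λ·N(u)(t) for all t ∈ [0,a], one has ‖u(t)‖ < R(t) for all t ∈ [0,a]. -/

import Mathlib

open MeasureTheory

/-- The set `Ū` of continuous functions `u : [0,a] → X` with `‖u t‖ ≤ R t` for all `t`. -/
def UbarSet {X : Type*} [NormedAddCommGroup X] (a : ℝ) (R : ℝ → ℝ) :
    Set C(Set.Icc (0:ℝ) a, X) :=
  {u | ∀ t : Set.Icc (0:ℝ) a, ‖u t‖ ≤ R t}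

/-!
With `r` as in (h3), the growth condition and the truncation of `∫₀ᵗ T(t,s) Φ(u)(s) ds` at `a_F`
give `‖u(t)‖ ≤ λ g(t)`, where `g(t) = r + M ∫₀ᵗ δ(s) ψ(‖u(s)‖) ds`. As `ψ` is nondecreasing,
`g' ≤ M δ ψ(g)`, so that `∫_r^{g(t)} dτ/ψ(τ) ≤ M ∫₀ᵗ δ ≤ ∫_r^{R(t)} dτ/ψ(τ)`. Hence
`g(t) ≤ R(t)` and `‖u(t)‖ ≤ λ R(t) < R(t)`.

The change of variables `τ = g(s)` for the absolutely continuous `g` is the statement that `g`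
pushes the measure `g'(s) ds` forward to Lebesgue measure on `(r, g(t)]`. It is used for `∫⁻`,
since `1/ψ` may fail to be integrable near `0` when `r = 0`; the integral in (h3) then takes the
junk value `0`.
-/

section

open Set

theorem exists_preimage_Iic_inter_Ioc_eq {α β : Type*} [ConditionallyCompleteLinearOrder α]
    [TopologicalSpace α] [OrderTopology α] [DenselyOrdered α] [LinearOrder β] [TopologicalSpace β]
    [OrderClosedTopology β] {a b : α} {g : α → β} {y : β} (hab : a ≤ b)
    (hg : ContinuousOn g (Icc a b)) (hmono : MonotoneOn g (Icc a b)) (hy : g a ≤ y) :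
    ∃ s ∈ Icc a b, g s = min (g b) y ∧ g ⁻¹' Iic y ∩ Ioc a b = Ioc a s := by
  have ha : a ∈ Icc a b := left_mem_Icc.2 hab
  have hb : b ∈ Icc a b := right_mem_Icc.2 hab
  obtain ⟨s, ⟨hs, hsy⟩, hmax⟩ : ∃ s, IsGreatest (Icc a b ∩ g ⁻¹' Iic y) s :=
    (isCompact_Icc.of_isClosed_subset (hg.preimage_isClosed_of_isClosed isClosed_Icc isClosed_Iic)
      inter_subset_left).exists_isGreatest ⟨a, ha, hy⟩
  refine ⟨s, hs, le_antisymm (le_min (hmono hs hb hs.2) hsy) ?_, Subset.antisymm ?_ ?_⟩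
  · obtain ⟨z, hz, hgz⟩ := intermediate_value_Icc hab hg
      ⟨le_min (hmono ha hb hab) hy, min_le_left (g b) y⟩
    exact hgz ▸ hmono hz hs (hmax ⟨hz, hgz.trans_le (min_le_right _ _)⟩)
  · exact fun z ⟨hzy, hz⟩ => ⟨hz.1, hmax ⟨Ioc_subset_Icc_self hz, hzy⟩⟩
  · exact fun z hz => ⟨(hmono ⟨hz.1.le, hz.2.trans hs.2⟩ hs hz.2).trans hsy,
      hz.1, hz.2.trans hs.2⟩

section MonotonePushforward

variable {a b : ℝ}

theorem map_restrict_Ioc_of_monotoneOn {μ : Measure ℝ} {g : ℝ → ℝ} (hab : a ≤ b)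
    (hg : ContinuousOn g (Icc a b)) (hmono : MonotoneOn g (Icc a b))
    (hμ : ∀ s ∈ Icc a b, μ (Ioc a s) = ENNReal.ofReal (g s - g a)) :
    (μ.restrict (Ioc a b)).map g = volume.restrict (Ioc (g a) (g b)) := by
  have ha : a ∈ Icc a b := left_mem_Icc.2 hab
  have hgm : AEMeasurable g (μ.restrict (Ioc a b)) :=
    (hg.mono Ioc_subset_Icc_self).aemeasurable measurableSet_Ioc
  have : IsFiniteMeasure (μ.restrict (Ioc a b)) :=
    isFiniteMeasure_restrict.2 (hμ b (right_mem_Icc.2 hab) ▸ ENNReal.ofReal_ne_top)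
  refine Measure.ext_of_Iic _ _ fun y => ?_
  rw [Measure.map_apply_of_aemeasurable hgm measurableSet_Iic,
    Measure.restrict_apply measurableSet_Iic, inter_comm (Iic y), Ioc_inter_Iic,
    Real.volume_Ioc, Measure.restrict_apply₀' measurableSet_Ioc.nullMeasurableSet]
  rcases lt_or_ge y (g a) with hy | hy
  · have hempty : g ⁻¹' Iic y ∩ Ioc a b = ∅ := by
      ext s
      simp only [mem_inter_iff, mem_preimage, mem_Iic, mem_empty_iff_false, iff_false, not_and]
      exact fun hs hsab =>
        (hy.trans_le (hmono ha (Ioc_subset_Icc_self hsab) hsab.1.le)).not_ge hs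
    rw [hempty, measure_empty, ENNReal.ofReal_of_nonpos]
    linarith [min_le_right (g b) y]
  · obtain ⟨s, hs, hgs, hpre⟩ := exists_preimage_Iic_inter_Ioc_eq hab hg hmono hy
    rw [hpre, hμ s hs, hgs]

theorem lintegral_Ioc_add_integral_le {k : ℝ → ℝ} {c : ℝ} (hab : a ≤ b)
    (hk : IntervalIntegrable k volume a b) (hk0 : ∀ s ∈ Icc a b, 0 ≤ k s) (h : ℝ → ENNReal) :
    ∫⁻ y in Ioc c (c + ∫ x in a..b, k x), h y ≤
      ∫⁻ s in Ioc a b, ENNReal.ofReal (k s) * h (c + ∫ x in a..s, k x) := by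
  set g : ℝ → ℝ := fun s => c + ∫ x in a..s, k x with hg
  have hga : g a = c := by simp [hg]
  have hgc : ContinuousOn g (Icc a b) := by
    have := intervalIntegral.continuousOn_primitive_interval' hk left_mem_uIcc
    exact continuousOn_const.add (uIcc_of_le hab ▸ this)
  have hks : ∀ s ∈ Icc a b, IntervalIntegrable k volume a s := fun s hs =>
    hk.mono_set (uIcc_subset_uIcc left_mem_uIcc (uIcc_of_le hab ▸ hs))
  have hmono : MonotoneOn g (Icc a b) := fun x hx y hy hxy =>
    add_le_add_right (intervalIntegral.integral_mono_interval le_rfl hx.1 hxy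
      ((ae_restrict_iff' measurableSet_Ioc).2 <| .of_forall fun s hs =>
        hk0 s ⟨hs.1.le, hs.2.trans hy.2⟩) (hks y hy)) c
  set μ : Measure ℝ := volume.withDensity fun s => ENNReal.ofReal (k s)
  have hμ : ∀ s ∈ Icc a b, μ (Ioc a s) = ENNReal.ofReal (g s - g a) := by
    intro s hs
    have hpos : 0 ≤ᵐ[volume.restrict (Ioc a s)] k :=
      (ae_restrict_iff' measurableSet_Ioc).2 <| .of_forall fun x hx =>
        hk0 x ⟨hx.1.le, hx.2.trans hs.2⟩
    rw [withDensity_apply _ measurableSet_Ioc,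
      ← ofReal_integral_eq_lintegral_ofReal (hks s hs).1 hpos, hga,
      ← intervalIntegral.integral_of_le hs.1, add_sub_cancel_left]
  calc ∫⁻ y in Ioc c (g b), h y
      = ∫⁻ y, h y ∂(μ.restrict (Ioc a b)).map g := by
        rw [map_restrict_Ioc_of_monotoneOn hab hgc hmono hμ, hga]
    _ ≤ ∫⁻ s in Ioc a b, h (g s) ∂μ := lintegral_map_le _ _
    _ = ∫⁻ s in Ioc a b, ENNReal.ofReal (k s) * h (g s) :=
        setLIntegral_withDensity_eq_setLIntegral_mul_non_measurable₀ _
          hk.1.aemeasurable.ennreal_ofReal _ measurableSet_Ioc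
          (.of_forall fun _ => ENNReal.ofReal_lt_top)

end MonotonePushforward

theorem ofReal_integral_le_lintegral_ofReal {α : Type*} [MeasurableSpace α] {μ : Measure α}
    (f : α → ℝ) : ENNReal.ofReal (∫ x, f x ∂μ) ≤ ∫⁻ x, ENNReal.ofReal (f x) ∂μ := by
  by_cases hf : Integrable f μ
  · rw [integral_eq_lintegral_pos_part_sub_lintegral_neg_part hf]
    exact (ENNReal.ofReal_le_ofReal (sub_le_self _ ENNReal.toReal_nonneg)).trans
      ENNReal.ofReal_toReal_le
  · simp [integral_undef hf]

theorem setLIntegral_Ioc_lt_setLIntegral_Ioc {μ : Measure ℝ} {f : ℝ → ENNReal} {x y z : ℝ}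
    {ε : ENNReal} (hxy : x ≤ y) (hyz : y ≤ z) (hμ : μ (Ioc y z) ≠ 0) (hε : ε ≠ 0)
    (hf : ∀ t ∈ Ioc y z, ε ≤ f t)
    (hfin : ∫⁻ t in Ioc x y, f t ∂μ ≠ ⊤) :
    ∫⁻ t in Ioc x y, f t ∂μ < ∫⁻ t in Ioc x z, f t ∂μ := by
  have hpos : 0 < ∫⁻ t in Ioc y z, f t ∂μ :=
    calc 0 < ε * μ (Ioc y z) := ENNReal.mul_pos hε hμ
      _ = ∫⁻ _ in Ioc y z, ε ∂μ := (setLIntegral_const _ _).symm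
      _ ≤ ∫⁻ t in Ioc y z, f t ∂μ := setLIntegral_mono' measurableSet_Ioc hf
  rw [← Ioc_union_Ioc_eq_Ioc hxy hyz,
    lintegral_union measurableSet_Ioc (Ioc_disjoint_Ioc_of_le le_rfl)]
  exact ENNReal.lt_add_right hfin hpos.ne'

section Bihari

variable {a b r R : ℝ} {δ ψ w : ℝ → ℝ}

theorem lintegral_inv_le_lintegral_of_le_add_integral (hab : a ≤ b)
    (hδ : ∀ s ∈ Icc a b, 0 ≤ δ s) (hψ0 : 0 ≤ ψ 0) (hψ : MonotoneOn ψ (Ici 0))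
    (hw0 : ∀ s ∈ Icc a b, 0 ≤ w s)
    (hint : IntervalIntegrable (fun s => δ s * ψ (w s)) volume a b)
    (hw : ∀ s ∈ Icc a b, w s ≤ r + ∫ x in a..s, δ x * ψ (w x)) :
    ∫⁻ y in Ioc r (r + ∫ x in a..b, δ x * ψ (w x)), ENNReal.ofReal (ψ y)⁻¹ ≤
      ∫⁻ s in Ioc a b, ENNReal.ofReal (δ s) := by
  have hψnn : ∀ x, 0 ≤ x → 0 ≤ ψ x := fun x hx => hψ0.trans (hψ self_mem_Ici hx hx)
  have hk0 : ∀ s ∈ Icc a b, 0 ≤ δ s * ψ (w s) := fun s hs =>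
    mul_nonneg (hδ s hs) (hψnn _ (hw0 s hs))
  refine (lintegral_Ioc_add_integral_le hab hint hk0 _).trans
    (setLIntegral_mono' measurableSet_Ioc fun s hs => ?_)
  have hs := Ioc_subset_Icc_self hs
  have hgs := (hw0 s hs).trans (hw s hs)
  rw [← ENNReal.ofReal_mul (hk0 s hs), mul_assoc, ← div_eq_mul_inv]
  exact ENNReal.ofReal_le_ofReal <| mul_le_of_le_one_right (hδ s hs) <|
    div_le_one_of_le₀ (hψ (hw0 s hs) hgs (hw s hs)) (hψnn _ hgs)

theorem add_integral_le_of_integral_le_integral_inv (hab : a ≤ b) (hrR : r ≤ R)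
    (hδ : ∀ s ∈ Icc a b, 0 ≤ δ s) (hδint : IntervalIntegrable δ volume a b)
    (hψ0 : 0 ≤ ψ 0) (hψpos : ∀ x, 0 < x → 0 < ψ x) (hψ : MonotoneOn ψ (Ici 0))
    (hw0 : ∀ s ∈ Icc a b, 0 ≤ w s)
    (hint : IntervalIntegrable (fun s => δ s * ψ (w s)) volume a b)
    (hw : ∀ s ∈ Icc a b, w s ≤ r + ∫ x in a..s, δ x * ψ (w x))
    (hB : ∫ s in a..b, δ s ≤ ∫ y in r..R, (ψ y)⁻¹) :
    r + ∫ x in a..b, δ x * ψ (w x) ≤ R := by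
  set G := r + ∫ x in a..b, δ x * ψ (w x)
  have hr : 0 ≤ r := by
    simpa using (hw0 a (left_mem_Icc.2 hab)).trans (hw a (left_mem_Icc.2 hab))
  by_contra! hRG
  have hG : 0 < G := hr.trans_lt (hrR.trans_lt hRG)
  have hδlint : ∫⁻ s in Ioc a b, ENNReal.ofReal (δ s) = ENNReal.ofReal (∫ s in a..b, δ s) := by
    rw [intervalIntegral.integral_of_le hab, ofReal_integral_eq_lintegral_ofReal hδint.1]
    exact ae_restrict_of_forall_mem measurableSet_Ioc fun s hs => hδ s (Ioc_subset_Icc_self hs)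
  have hle : ∫⁻ y in Ioc r G, ENNReal.ofReal (ψ y)⁻¹ ≤ ENNReal.ofReal (∫ s in a..b, δ s) :=
    (lintegral_inv_le_lintegral_of_le_add_integral hab hδ hψ0 hψ hw0 hint hw).trans_eq hδlint
  have hfin : ∫⁻ y in Ioc r R, ENNReal.ofReal (ψ y)⁻¹ ≠ ⊤ :=
    ne_top_of_le_ne_top ENNReal.ofReal_ne_top <|
      (lintegral_mono_set (Ioc_subset_Ioc_right hRG.le)).trans hle
  have hlt : ∫⁻ y in Ioc r R, ENNReal.ofReal (ψ y)⁻¹ < ∫⁻ y in Ioc r G, ENNReal.ofReal (ψ y)⁻¹ :=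
    setLIntegral_Ioc_lt_setLIntegral_Ioc hrR hRG.le (by simpa using hRG)
      (ENNReal.ofReal_pos.2 (inv_pos.2 (hψpos G hG))).ne'
      (fun y hy =>
        have hy0 : 0 < y := hr.trans_lt (hrR.trans_lt hy.1)
        ENNReal.ofReal_le_ofReal <| inv_anti₀ (hψpos y hy0) (hψ hy0.le hG.le hy.2)) hfin
  refine lt_irrefl (∫⁻ y in Ioc r R, ENNReal.ofReal (ψ y)⁻¹) ?_
  calc _ < ∫⁻ y in Ioc r G, ENNReal.ofReal (ψ y)⁻¹ := hlt
    _ ≤ ENNReal.ofReal (∫ s in a..b, δ s) := hle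
    _ ≤ ENNReal.ofReal (∫ y in r..R, (ψ y)⁻¹) := ENNReal.ofReal_le_ofReal hB
    _ ≤ ∫⁻ y in Ioc r R, ENNReal.ofReal (ψ y)⁻¹ := by
        rw [intervalIntegral.integral_of_le hrR]
        exact ofReal_integral_le_lintegral_ofReal _

end Bihari

theorem integrableOn_mul_comp_of_monotoneOn {α : Type*} [TopologicalSpace α] [MeasurableSpace α]
    [OpensMeasurableSpace α] {μ : Measure α} {K : Set α} {δ w : α → ℝ} {ψ : ℝ → ℝ} {c : ℝ}
    (hK : IsCompact K) (hKm : MeasurableSet K) (hδ : IntegrableOn δ K μ)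
    (hψ : MonotoneOn ψ (Ici c)) (hw : ContinuousOn w K) (hwc : ∀ s ∈ K, c ≤ w s) :
    IntegrableOn (fun s => δ s * ψ (w s)) K μ := by
  obtain ⟨C, hC⟩ := hK.bddAbove_image hw
  have hext : Monotone fun x => ψ (max c x) := fun x y hxy =>
    hψ (mem_Ici.2 (le_max_left c x)) (mem_Ici.2 (le_max_left c y)) (max_le_max_left c hxy)
  have hmeas : AEStronglyMeasurable (fun s => ψ (w s)) (μ.restrict K) :=
    ((hext.measurable.comp_aemeasurable (hw.aemeasurable hKm)).congr <|
      ae_restrict_of_forall_mem hKm fun s hs => by simp [hwc s hs]).aestronglyMeasurable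
  refine hδ.mul_bdd (c := max |ψ c| |ψ C|) hmeas (ae_restrict_of_forall_mem hKm fun s hs => ?_)
  have hwC : w s ≤ C := hC (mem_image_of_mem w hs)
  exact abs_le_max_abs_abs (hψ self_mem_Ici (hwc s hs) (hwc s hs))
    (hψ (hwc s hs) ((hwc s hs).trans hwC) hwC)

section OperatorIntegrals

variable {𝕜 E E' : Type*} [NontriviallyNormedField 𝕜] [NormedAddCommGroup E] [NormedSpace 𝕜 E]
  [NormedAddCommGroup E'] [NormedSpace 𝕜 E'] {S : ℝ → E →L[𝕜] E'} {f : ℝ → E} {a b : ℝ}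
  {μ : Measure ℝ}

theorem intervalIntegrable_clm_apply_of_continuousOn (hS : ContinuousOn S (uIcc a b))
    (hf : IntervalIntegrable f μ a b) : IntervalIntegrable (fun s => S s (f s)) μ a b := by
  have hSm : AEStronglyMeasurable S (μ.restrict (uIoc a b)) :=
    (hS.mono uIoc_subset_uIcc).aestronglyMeasurable measurableSet_uIoc
  refine (hf.norm.continuousOn_mul hS.norm).mono_fun ?_ (.of_forall fun s => ?_)
  · exact (ContinuousLinearMap.id 𝕜 _).aestronglyMeasurable_comp₂ hSm
      (intervalIntegrable_iff.1 hf).aestronglyMeasurable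
  · simpa using (S s).le_opNorm (f s)

theorem intervalIntegrable_apply_of_continuousOn_triangle {T : ℝ → ℝ → E →L[𝕜] E'} {t : ℝ}
    (hT : ContinuousOn (fun p : ℝ × ℝ => T p.1 p.2) {p | a ≤ p.2 ∧ p.2 ≤ p.1 ∧ p.1 ≤ b})
    (hf : IntegrableOn f (Icc a b) μ) (ht : t ∈ Icc a b) :
    IntervalIntegrable (fun s => T t s (f s)) μ a t := by
  have hat : uIcc a t = Icc a t := uIcc_of_le ht.1
  refine intervalIntegrable_clm_apply_of_continuousOn
    (hT.comp (f := fun s => (t, s)) (by fun_prop) fun s hs => ?_)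
    (hf.mono_set (hat.trans_subset (Icc_subset_Icc_right ht.2))).intervalIntegrable
  rw [hat] at hs
  exact ⟨hs.1, hs.2, ht.2⟩

theorem norm_integral_clm_apply_le [NormedSpace ℝ E'] {φ : ℝ → ℝ} {M : ℝ} (hab : a ≤ b)
    (hS : ∀ s ∈ Ioc a b, ‖S s‖ ≤ M) (hf : ∀ᵐ s ∂μ.restrict (Ioc a b), ‖f s‖ ≤ φ s)
    (hφ : IntervalIntegrable φ μ a b) :
    ‖∫ s in a..b, S s (f s) ∂μ‖ ≤ M * ∫ s in a..b, φ s ∂μ := by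
  rw [← intervalIntegral.integral_const_mul]
  refine intervalIntegral.norm_integral_le_of_norm_le hab ?_ (hφ.const_mul M)
  filter_upwards [(ae_restrict_iff' measurableSet_Ioc).1 hf] with s hfs hs
  exact (S s).le_of_opNorm_le_of_le (hS s hs) (hfs hs)

end OperatorIntegrals

theorem norm_clm_apply_le_of_initial_dependence {X Y : Type*} [NormedAddCommGroup X]
    [NormedSpace ℝ X] [NormedAddCommGroup Y] [NormedSpace ℝ Y] {a b c K : ℝ} (hc : c ∈ Icc a b)
    {L : C(Icc a b, X) →L[ℝ] Y}
    (hL : ∀ u v : C(Icc a b, X), (∀ t : Icc a b, (t : ℝ) ≤ c → u t = v t) → L u = L v)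
    {v : C(Icc a b, X)} (hv : ∀ t : Icc a b, (t : ℝ) ≤ c → ‖v t‖ ≤ K) : ‖L v‖ ≤ ‖L‖ * K := by
  let trunc : C(Icc a b, Icc a b) :=
    ⟨fun t => ⟨min t c, le_min t.2.1 hc.1, (min_le_left _ _).trans t.2.2⟩, by fun_prop⟩
  have htrunc : L v = L (v.comp trunc) := hL _ _ fun t ht =>
    congrArg v (Subtype.ext (min_eq_left ht).symm)
  have hK : 0 ≤ K := (norm_nonneg _).trans (hv ⟨c, hc⟩ le_rfl)
  rw [htrunc]
  exact L.le_opNorm_of_le <| (ContinuousMap.norm_le _ hK).2 fun t => hv _ (min_le_right _ _)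

theorem integral_mul_comp_le_integral_mul_comp {δ ψ w R : ℝ → ℝ} {a b c s : ℝ}
    (hδint : IntegrableOn δ (Icc a b)) (hδ : ∀ x ∈ Icc a b, 0 ≤ δ x)
    (hψ0 : 0 ≤ ψ 0) (hψ : MonotoneOn ψ (Ici 0))
    (hwc : ContinuousOn w (Icc a b)) (hRc : ContinuousOn R (Icc a b))
    (hw0 : ∀ x ∈ Icc a b, 0 ≤ w x) (hwR : ∀ x ∈ Icc a b, w x ≤ R x)
    (has : a ≤ s) (hsc : s ≤ c) (hcb : c ≤ b) :
    ∫ x in a..s, δ x * ψ (w x) ≤ ∫ x in a..c, δ x * ψ (R x) := by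
  have hR0 : ∀ x ∈ Icc a b, 0 ≤ R x := fun x hx => (hw0 x hx).trans (hwR x hx)
  have hsub : ∀ {d}, a ≤ d → d ≤ b → uIcc a d ⊆ Icc a b := fun had hdb =>
    (uIcc_of_le had).trans_subset (Icc_subset_Icc_right hdb)
  have hδψw := integrableOn_mul_comp_of_monotoneOn isCompact_Icc measurableSet_Icc hδint hψ hwc hw0
  have hδψR := integrableOn_mul_comp_of_monotoneOn isCompact_Icc measurableSet_Icc hδint hψ hRc hR0
  calc ∫ x in a..s, δ x * ψ (w x)
      ≤ ∫ x in a..s, δ x * ψ (R x) := by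
        refine intervalIntegral.integral_mono_on has
          (hδψw.mono_set (hsub has (hsc.trans hcb))).intervalIntegrable
          (hδψR.mono_set (hsub has (hsc.trans hcb))).intervalIntegrable fun x hx => ?_
        have hx : x ∈ Icc a b := ⟨hx.1, hx.2.trans (hsc.trans hcb)⟩
        exact mul_le_mul_of_nonneg_left (hψ (hw0 x hx) (hR0 x hx) (hwR x hx)) (hδ x hx)
    _ ≤ ∫ x in a..c, δ x * ψ (R x) := by
        refine intervalIntegral.integral_mono_interval le_rfl has hsc
          (ae_restrict_of_forall_mem measurableSet_Ioc fun x hx => ?_)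
          (hδψR.mono_set (hsub (has.trans hsc) hcb)).intervalIntegrable
        have hx : x ∈ Icc a b := ⟨hx.1.le, hx.2.trans hcb⟩
        exact mul_nonneg (hδ x hx) (hψ0.trans (hψ self_mem_Ici (hR0 x hx) (hR0 x hx)))

theorem lt_of_le_mul_add_integral {δ ψ w : ℝ → ℝ} {a b r R M lam : ℝ} (hab : a ≤ b)
    (hr : 0 ≤ r) (hrR : r < R) (hM : 0 ≤ M)
    (hδint : IntegrableOn δ (Icc a b)) (hδ : ∀ s ∈ Icc a b, 0 ≤ δ s)
    (hψ0 : 0 ≤ ψ 0) (hψpos : ∀ x, 0 < x → 0 < ψ x) (hψ : MonotoneOn ψ (Ici 0))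
    (hwc : ContinuousOn w (Icc a b)) (hw0 : ∀ s ∈ Icc a b, 0 ≤ w s)
    (hlam0 : 0 ≤ lam) (hlam1 : lam < 1)
    (hw : ∀ s ∈ Icc a b, w s ≤ lam * (r + M * ∫ x in a..s, δ x * ψ (w x)))
    (hB : M * ∫ s in a..b, δ s ≤ ∫ y in r..R, (ψ y)⁻¹) :
    w b < R := by
  have hδψ : IntervalIntegrable (fun s => δ s * ψ (w s)) volume a b :=
    (uIcc_of_le hab ▸ integrableOn_mul_comp_of_monotoneOn isCompact_Icc measurableSet_Icc
      hδint hψ hwc hw0).intervalIntegrable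
  have hI0 : ∀ s ∈ Icc a b, 0 ≤ ∫ x in a..s, δ x * ψ (w x) := fun s hs =>
    intervalIntegral.integral_nonneg hs.1 fun x hx =>
      have hx := Icc_subset_Icc_right hs.2 hx
      mul_nonneg (hδ x hx) (hψ0.trans (hψ self_mem_Ici (hw0 x hx) (hw0 x hx)))
  have hw_le : ∀ s ∈ Icc a b, w s ≤ r + ∫ x in a..s, M * δ x * ψ (w x) := fun s hs => by
    simp only [mul_assoc, intervalIntegral.integral_const_mul]
    exact (hw s hs).trans <| mul_le_of_le_one_left
      (add_nonneg hr (mul_nonneg hM (hI0 s hs))) hlam1.le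
  have hbound : r + ∫ x in a..b, M * δ x * ψ (w x) ≤ R :=
    add_integral_le_of_integral_le_integral_inv hab hrR.le
      (fun s hs => mul_nonneg hM (hδ s hs))
      ((uIcc_of_le hab ▸ hδint).intervalIntegrable.const_mul M) hψ0 hψpos hψ hw0
      (by simpa only [mul_assoc] using hδψ.const_mul M) hw_le
      ((intervalIntegral.integral_const_mul M δ).trans_le hB)
  simp only [mul_assoc, intervalIntegral.integral_const_mul] at hbound
  calc w b ≤ lam * (r + M * ∫ x in a..b, δ x * ψ (w x)) := hw b (right_mem_Icc.2 hab)
    _ ≤ lam * R := mul_le_mul_of_nonneg_left hbound hlam0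
    _ < R := mul_lt_of_lt_one_left (hr.trans_lt hrR) hlam1

theorem norm_lt_of_nonlocal_volterra_bound {X Y : Type*} [NormedAddCommGroup X] [NormedSpace ℝ X]
    [NormedAddCommGroup Y] [NormedSpace ℝ Y] {a aF M lam : ℝ} {R δ ψ : ℝ → ℝ}
    {L : C(Icc (0 : ℝ) a, X) →L[ℝ] Y} {u v : C(Icc (0 : ℝ) a, X)}
    (ha : 0 ≤ a) (hM : 0 ≤ M) (hRc : ContinuousOn R (Icc 0 a)) (haF : aF ∈ Icc 0 a)
    (hsupp : ∀ u v : C(Icc (0 : ℝ) a, X),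
      (∀ t : Icc (0 : ℝ) a, (t : ℝ) ≤ aF → u t = v t) → L u = L v)
    (hδint : IntegrableOn δ (Icc 0 a)) (hδ0 : ∀ t ∈ Icc 0 a, 0 ≤ δ t)
    (hψm : MonotoneOn ψ (Ici 0)) (hψ0 : 0 ≤ ψ 0) (hψpos : ∀ s : ℝ, 0 < s → 0 < ψ s)
    (hr : ∀ t ∈ Icc 0 a, M ^ 2 * ‖L‖ * (∫ s in (0 : ℝ)..aF, δ s * ψ (R s)) < R t)
    (hBihari : ∀ t ∈ Icc 0 a, M * (∫ s in (0 : ℝ)..t, δ s) ≤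
      ∫ τ in (M ^ 2 * ‖L‖ * (∫ s in (0 : ℝ)..aF, δ s * ψ (R s)))..(R t), (ψ τ)⁻¹)
    (huR : u ∈ UbarSet a R) (hlam0 : 0 ≤ lam) (hlam1 : lam < 1)
    (hv : ∀ t : Icc (0 : ℝ) a, ‖v t‖ ≤ M * ∫ s in (0 : ℝ)..t, δ s * ψ ‖IccExtend ha u s‖)
    (hu : ∀ t : Icc (0 : ℝ) a, ‖u t‖ ≤ lam * (M * ‖L v‖ + ‖v t‖)) (t : Icc (0 : ℝ) a) :
    ‖u t‖ < R t := by
  set w : ℝ → ℝ := fun s => ‖IccExtend ha u s‖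
  set r : ℝ := M ^ 2 * ‖L‖ * ∫ s in (0 : ℝ)..aF, δ s * ψ (R s)
  have hwu : ∀ s (hs : s ∈ Icc 0 a), w s = ‖u ⟨s, hs⟩‖ := fun s hs =>
    congrArg norm (IccExtend_of_mem ha u hs)
  have hwc : ContinuousOn w (Icc 0 a) := u.continuous.Icc_extend'.norm.continuousOn
  have hwR : ∀ s ∈ Icc 0 a, w s ≤ R s := fun s hs => (hwu s hs).trans_le (huR ⟨s, hs⟩)
  have hI : ∀ s ∈ Icc 0 aF,
      ∫ x in (0 : ℝ)..s, δ x * ψ (w x) ≤ ∫ x in (0 : ℝ)..aF, δ x * ψ (R x) := fun s hs =>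
    integral_mul_comp_le_integral_mul_comp hδint hδ0 hψ0 hψm hwc hRc
      (fun _ _ => norm_nonneg _) hwR hs.1 hs.2 haF.2
  have hLv : M * ‖L v‖ ≤ r :=
    calc M * ‖L v‖ ≤ M * (‖L‖ * (M * ∫ x in (0 : ℝ)..aF, δ x * ψ (R x))) :=
          mul_le_mul_of_nonneg_left (norm_clm_apply_le_of_initial_dependence haF hsupp fun s hs =>
            (hv s).trans (mul_le_mul_of_nonneg_left (hI s ⟨s.2.1, hs⟩) hM)) hM
      _ = r := by ring
  have hsub : Icc 0 (t : ℝ) ⊆ Icc 0 a := Icc_subset_Icc_right t.2.2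
  refine (hwu t t.2).symm.trans_lt <| lt_of_le_mul_add_integral t.2.1
    ((mul_nonneg hM (norm_nonneg _)).trans hLv) (hr t t.2) hM (hδint.mono_set hsub)
    (fun s hs => hδ0 s (hsub hs)) hψ0 hψpos hψm (hwc.mono hsub) (fun _ _ => norm_nonneg _)
    hlam0 hlam1 (fun s hs => ?_) (hBihari t t.2)
  rw [hwu s (hsub hs)]
  exact (hu ⟨s, hsub hs⟩).trans <|
    mul_le_mul_of_nonneg_left (add_le_add hLv (hv ⟨s, hsub hs⟩)) hlam0

theorem stmt_2_general {X : Type*} [NormedAddCommGroup X] [NormedSpace ℝ X] [CompleteSpace X]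
    {a : ℝ} (T : ℝ → ℝ → X →L[ℝ] X) {M : ℝ}
    (hTM : ∀ t s : ℝ, 0 ≤ s → s ≤ t → t ≤ a → ‖T t s‖ ≤ M)
    {R : ℝ → ℝ} (hRc : ContinuousOn R (Icc 0 a))
    {L : C(Icc (0 : ℝ) a, X) →L[ℝ] X} {aF : ℝ} (haF : aF ∈ Icc 0 a)
    (hsupp : ∀ u v : C(Icc (0 : ℝ) a, X),
      (∀ t : Icc (0 : ℝ) a, (t : ℝ) ≤ aF → u t = v t) → L u = L v)
    {δ ψ : ℝ → ℝ} (hδint : IntegrableOn δ (Icc 0 a)) (hδ0 : ∀ t ∈ Icc 0 a, 0 ≤ δ t)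
    (hψm : MonotoneOn ψ (Ici 0)) (hψ0 : 0 ≤ ψ 0) (hψpos : ∀ s : ℝ, 0 < s → 0 < ψ s)
    (hr : ∀ t ∈ Icc 0 a, M ^ 2 * ‖L‖ * (∫ s in (0 : ℝ)..aF, δ s * ψ (R s)) < R t)
    (hBihari : ∀ t ∈ Icc 0 a, M * (∫ s in (0 : ℝ)..t, δ s) ≤
      ∫ τ in (M ^ 2 * ‖L‖ * (∫ s in (0 : ℝ)..aF, δ s * ψ (R s)))..(R t), (ψ τ)⁻¹)
    {u v : C(Icc (0 : ℝ) a, X)} {f : ℝ → X} (hu : u ∈ UbarSet a R)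
    (_hTf : ∀ t ∈ Icc 0 a, IntervalIntegrable (fun s => T t s (f s)) volume 0 t)
    (hv : ∀ t : Icc (0 : ℝ) a, v t = ∫ s in (0 : ℝ)..t, T t s (f s))
    (hf : ∀ᵐ t ∂volume.restrict (Icc 0 a), ∀ ht : t ∈ Icc 0 a, ‖f t‖ ≤ δ t * ψ ‖u ⟨t, ht⟩‖)
    {lam : ℝ} (hlam0 : 0 ≤ lam) (hlam1 : lam < 1)
    (hfix : ∀ t : Icc (0 : ℝ) a, u t = lam • (T t 0 (L v) + v t)) (t : Icc (0 : ℝ) a) :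
    ‖u t‖ < R t := by
  have ha : 0 ≤ a := haF.1.trans haF.2
  have hM : 0 ≤ M := (norm_nonneg _).trans (hTM 0 0 le_rfl le_rfl ha)
  have hφ : IntegrableOn (fun s => δ s * ψ ‖IccExtend ha u s‖) (Icc 0 a) :=
    integrableOn_mul_comp_of_monotoneOn isCompact_Icc measurableSet_Icc hδint hψm
      u.continuous.Icc_extend'.norm.continuousOn fun _ _ => norm_nonneg _
  refine norm_lt_of_nonlocal_volterra_bound (L := L) (v := v) ha hM hRc haF hsupp hδint hδ0 hψm hψ0
    hψpos hr hBihari hu hlam0 hlam1 (fun t => ?_) (fun t => ?_) t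
  · have hsub : Icc 0 (t : ℝ) ⊆ Icc 0 a := Icc_subset_Icc_right t.2.2
    rw [hv t]
    refine norm_integral_clm_apply_le t.2.1 (fun s hs => hTM t s hs.1.le hs.2 t.2.2) ?_
      (hφ.mono_set ((uIcc_of_le t.2.1).trans_subset hsub)).intervalIntegrable
    refine ae_restrict_of_ae_restrict_of_subset (Ioc_subset_Icc_self.trans hsub) ?_
    filter_upwards [hf, ae_restrict_mem measurableSet_Icc] with s hfs hs
    simpa only [IccExtend_of_mem ha u hs] using hfs hs
  · rw [hfix t, norm_smul, Real.norm_of_nonneg hlam0]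
    exact mul_le_mul_of_nonneg_left ((norm_add_le _ _).trans <| add_le_add_left
      ((T t 0).le_of_opNorm_le (hTM t 0 le_rfl t.2.1 t.2.2) _) _) hlam0

end

/-- **Lemma 2.2.** Under (h1), (h2) and (h3), condition (h3⁰) holds: if `u ∈ Ū`,
`λ ∈ (0,1)` and `u = λ·N(u)`, then `‖u t‖ < R t` for all `t ∈ [0,a]`. -/
theorem stmt_2
    {X : Type*} [NormedAddCommGroup X] [NormedSpace ℝ X] [CompleteSpace X]
    {a : ℝ} (ha : 0 < a)
    (T : ℝ → ℝ → X →L[ℝ] X)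
    (hTcont : ContinuousOn (fun p : ℝ × ℝ => T p.1 p.2)
      {p : ℝ × ℝ | 0 ≤ p.2 ∧ p.2 ≤ p.1 ∧ p.1 ≤ a})
    (hTid : ∀ s ∈ Set.Icc (0:ℝ) a, T s s = ContinuousLinearMap.id ℝ X)
    (hTsemi : ∀ s r t : ℝ, 0 ≤ s → s ≤ r → r ≤ t → t ≤ a → (T t r).comp (T r s) = T t s)
    {M : ℝ} (hM : 0 < M)
    (hTM : ∀ t s : ℝ, 0 ≤ s → s ≤ t → t ≤ a → ‖T t s‖ ≤ M)
    (R : ℝ → ℝ) (hRc : ContinuousOn R (Set.Icc 0 a))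
    (hRpos : ∀ t ∈ Set.Icc (0:ℝ) a, 0 < R t)
    -- (h1)
    (Φ : C(Set.Icc (0:ℝ) a, X) → ℝ → X)
    (hΦint : ∀ u ∈ UbarSet (X := X) a R, IntegrableOn (Φ u) (Set.Icc 0 a))
    (hΦcont : ∀ (v : ℕ → C(Set.Icc (0:ℝ) a, X)) (u : C(Set.Icc (0:ℝ) a, X)),
      (∀ n, v n ∈ UbarSet (X := X) a R) → u ∈ UbarSet (X := X) a R →
      Filter.Tendsto (fun n => ‖v n - u‖) Filter.atTop (nhds 0) →
      Filter.Tendsto (fun n => ∫ s in Set.Icc (0:ℝ) a, ‖Φ (v n) s - Φ u s‖)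
        Filter.atTop (nhds 0))
    -- (h2)
    (F : C(Set.Icc (0:ℝ) a, X) →L[ℝ] X) (B : X →L[ℝ] X)
    (W : X → C(Set.Icc (0:ℝ) a, X))
    (hW : ∀ (x : X) (t : Set.Icc (0:ℝ) a), W x t = T (t : ℝ) 0 x)
    (hBleft : ∀ x : X, B (x - F (W x)) = x)
    (hBright : ∀ x : X, B x - F (W (B x)) = x)
    -- the support [0, a_F] of F
    {aF : ℝ} (haF : aF ∈ Set.Icc (0:ℝ) a)
    (hsupp : ∀ u v : C(Set.Icc (0:ℝ) a, X),
      (∀ t : Set.Icc (0:ℝ) a, (t : ℝ) ≤ aF → u t = v t) → F u = F v)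
    -- (h3)
    (δ : ℝ → ℝ) (hδint : IntegrableOn δ (Set.Icc 0 a)) (hδ0 : ∀ t, 0 ≤ δ t)
    (ψ : ℝ → ℝ) (hψc : ContinuousOn ψ (Set.Ici 0)) (hψm : MonotoneOn ψ (Set.Ici 0))
    (hψ0 : ∀ s : ℝ, 0 ≤ s → 0 ≤ ψ s) (hψpos : ∀ s : ℝ, 0 < s → 0 < ψ s)
    (hΦgrowth : ∀ u ∈ UbarSet (X := X) a R,
      ∀ᵐ t ∂(volume.restrict (Set.Icc 0 a)), ∀ ht : t ∈ Set.Icc (0:ℝ) a,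
        ‖Φ u t‖ ≤ δ t * ψ ‖u ⟨t, ht⟩‖)
    (hr : ∀ t ∈ Set.Icc (0:ℝ) a,
      M ^ 2 * ‖B.comp F‖ * (∫ s in (0:ℝ)..aF, δ s * ψ (R s)) < R t)
    (hBihari : ∀ t ∈ Set.Icc (0:ℝ) a,
      M * (∫ s in (0:ℝ)..t, δ s) ≤
        ∫ τ in (M ^ 2 * ‖B.comp F‖ * (∫ s in (0:ℝ)..aF, δ s * ψ (R s)))..(R t), (ψ τ)⁻¹)
    -- the operator N of the problem
    (N : C(Set.Icc (0:ℝ) a, X) → C(Set.Icc (0:ℝ) a, X))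
    (hN : ∀ u ∈ UbarSet (X := X) a R, ∃ v : C(Set.Icc (0:ℝ) a, X),
      (∀ t : Set.Icc (0:ℝ) a, v t = ∫ s in (0:ℝ)..(t : ℝ), T (t : ℝ) s (Φ u s)) ∧
      ∀ t : Set.Icc (0:ℝ) a,
        N u t = T (t : ℝ) 0 (B (F v)) + ∫ s in (0:ℝ)..(t : ℝ), T (t : ℝ) s (Φ u s)) :
    -- conclusion: (h3⁰)
    ∀ u ∈ UbarSet (X := X) a R, ∀ lam : ℝ, 0 < lam → lam < 1 →
      (∀ t : Set.Icc (0:ℝ) a, u t = lam • N u t) →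
      ∀ t : Set.Icc (0:ℝ) a, ‖u t‖ < R t := by
  intro u hu lam hlam0 hlam1 hfix
  obtain ⟨v, hv, hNu⟩ := hN u hu
  exact stmt_2_general (L := B.comp F) T hTM hRc haF (fun _ _ h => congrArg B (hsupp _ _ h)) hδint
    (fun t _ => hδ0 t) hψm (hψ0 0 le_rfl) hψpos hr hBihari hu
    (fun t ht => intervalIntegrable_apply_of_continuousOn_triangle hTcont (hΦint u hu) ht)
    hv (hΦgrowth u hu) hlam0.le hlam1 fun t => by rw [hfix t, hNu t, hv t]; rfl
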